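/- In a finite graph whose vertices are the 44 weights λ¹,…,λ⁴⁴ of Table 1 and whose edges connect i and j whenever c_{i,j} ≠ 0 (as listed in Table 2), the graph has exactly two connected components, of sizes 28 and 16. -/

import Mathlib

/-- Table 2 of the paper: the pairs `(i, j)` (1-indexed) with `c_{i,j} ≠ 0`. -/
def table2 : List (ℕ × ℕ) :=
  [(1,2),(1,4),(1,14),(1,29),(1,41),(1,43),(1,8),(1,20),(1,32),
   (2,7),(2,9),(2,16),(2,24),(2,44),(2,8),(2,13),(2,19),
   (3,6),(3,10),(3,17),(3,30),(3,35),(3,42),(3,15),(3,26),(3,39),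
   (4,7),(4,8),(4,20),(4,32),(4,38),(4,14),(4,29),(4,41),
   (5,11),(5,21),(5,23),(5,24),(5,37),(5,44),(5,16),(5,33),(5,40),
   (6,12),(6,15),(6,26),(6,31),(6,39),(6,17),(6,30),(6,42),
   (7,8),(7,13),(7,19),(7,40),(7,9),(7,16),(7,24),
   (8,9),(8,14),(8,16),(8,24),(8,29),(8,37),(8,41),(8,13),(8,19),(8,20),(8,32),
   (9,13),(9,14),(9,19),(9,33),(9,16),(9,24),
   (10,12),(10,22),(10,27),(10,35),(10,42),(10,18),(10,25),(10,31),
   (11,16),(11,19),(11,28),(11,33),(11,40),(11,23),(11,37),(11,44),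
   (12,18),(12,25),(12,31),(12,39),(12,22),(12,27),(12,35),
   (13,16),(13,20),(13,23),(13,24),(13,19),
   (14,20),(14,32),(14,36),(14,29),(14,41),
   (15,17),(15,18),(15,27),(15,30),(15,42),(15,26),(15,39),
   (16,19),(16,23),(16,29),(16,37),(16,44),(16,24),(16,33),(16,40),
   (17,22),(17,25),(17,26),(17,39),(17,30),(17,42),
   (18,22),(18,27),(18,30),(18,35),(18,25),(18,31),
   (19,24),(19,32),
   (20,29),(20,34),(20,41),(20,32),
   (21,28),(21,34),(21,37),(21,41),(21,43),(21,29),(21,36),(21,38),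
   (22,25),(22,26),(22,31),(22,27),(22,35),
   (23,33),(23,34),(23,40),(23,37),(23,44),
   (24,41),
   (25,26),(25,27),(25,35),(25,31),
   (26,30),(26,42),(26,39),
   (27,30),(27,31),(27,35),
   (28,29),(28,32),(28,36),(28,38),(28,34),(28,37),(28,43),
   (29,32),(29,34),(29,37),(29,43),(29,36),(29,38),(29,41),
   (30,39),(30,42),
   (31,35),(31,39),
   (32,41),
   (33,36),(33,37),(33,44),(33,40),
   (34,36),(34,38),(34,37),(34,43),
   (35,42),
   (36,37),(36,43),(36,38),
   (37,38),(37,40),(37,43),(37,44),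
   (38,40),(38,43),
   (39,42),
   (40,44),
   (43,44)]

/-- The graph on the 44 weights `λ¹, …, λ⁴⁴` of Table 1, with an edge between
`i` and `j` whenever `c_{i,j} ≠ 0` (Table 2). -/
def blockGraph : SimpleGraph (Fin 44) :=
  SimpleGraph.fromRel (fun i j => ((i : ℕ) + 1, (j : ℕ) + 1) ∈ table2)

/-- Parent (1-indexed) of each vertex in a spanning forest rooted at `1` and `3`. -/
def parentList : List ℕ :=
  [1,1,3,1,16,3,2,1,2,3,16,6,2,1,3,2,3,10,2,1,5,10,
   5,2,10,3,10,11,1,3,6,1,5,20,3,14,8,4,3,5,1,3,1,2]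

/-- The parent map on vertices. -/
def parent (i : Fin 44) : Fin 44 := Fin.ofNat 44 (parentList.getD i.val 1 - 1)

/-- Vertices whose root is `λ³` (1-indexed). -/
def inB (n : ℕ) : Bool := [3,6,10,12,15,17,18,22,25,26,27,30,31,35,39,42].contains n

set_option maxRecDepth 100000 in
theorem parent_edge : ∀ i : Fin 44, i = parent i ∨
    (((i : ℕ) + 1, (parent i : ℕ) + 1) ∈ table2 ∨
      ((parent i : ℕ) + 1, (i : ℕ) + 1) ∈ table2) := by
  decide +kernel

theorem reach_parent (i : Fin 44) : blockGraph.Reachable i (parent i) := by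
  by_cases h : i = parent i
  · rw [← h]
  · apply SimpleGraph.Adj.reachable
    rw [blockGraph, SimpleGraph.fromRel_adj]
    exact ⟨h, (parent_edge i).resolve_left h⟩

theorem reach_iter (n : ℕ) (i : Fin 44) : blockGraph.Reachable i (parent^[n] i) := by
  induction n generalizing i with
  | zero => exact SimpleGraph.Reachable.refl _
  | succ n ih => exact (reach_parent i).trans (ih (parent i))

theorem iter_root : ∀ i : Fin 44,
    parent^[6] i = if inB (i.val + 1) then 2 else 0 := by
  decide +kernel

theorem table_closed : ∀ p ∈ table2, inB p.1 = inB p.2 := by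
  decide +kernel

theorem reach_inB {i j : Fin 44} (h : blockGraph.Reachable i j) :
    inB (i.val + 1) = inB (j.val + 1) := by
  obtain ⟨w⟩ := h
  induction w with
  | nil => rfl
  | cons hadj _ ih =>
    rw [blockGraph, SimpleGraph.fromRel_adj] at hadj
    rcases hadj.2 with h | h
    · exact (table_closed _ h).trans ih
    · exact (table_closed _ h).symm.trans ih

theorem reach_of_inB {i j : Fin 44} (h : inB (i.val + 1) = inB (j.val + 1)) :
    blockGraph.Reachable i j := by
  have hi := reach_iter 6 i
  have hj := reach_iter 6 j
  rw [iter_root] at hi hj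
  rw [h] at hi
  exact hi.trans hj.symm

/-- this graph has exactly two connected components, of sizes
28 and 16. -/
theorem blockGraph_two_components :
    ∃ A : Finset (Fin 44), A.card = 28 ∧
      (∀ i ∈ A, ∀ j ∈ A, blockGraph.Reachable i j) ∧
      (∀ i ∉ A, ∀ j ∉ A, blockGraph.Reachable i j) ∧
      (∀ i ∈ A, ∀ j ∉ A, ¬ blockGraph.Reachable i j) := by
  refine ⟨Finset.univ.filter (fun i : Fin 44 => inB (i.val + 1) = false), ?_, ?_, ?_, ?_⟩
  · decide +kernel
  · intro i hi j hj
    simp only [Finset.mem_filter, Finset.mem_univ, true_and] at hi hj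
    exact reach_of_inB (hi.trans hj.symm)
  · intro i hi j hj
    simp only [Finset.mem_filter, Finset.mem_univ, true_and, Bool.not_eq_false] at hi hj
    exact reach_of_inB (hi.trans hj.symm)
  · intro i hi j hj h
    simp only [Finset.mem_filter, Finset.mem_univ, true_and] at hi hj
    exact hj ((reach_inB h).symm.trans hi)
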